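/- Define a(0) = 0 and a(n) = 29n² − 29n + 8 for n ≥ 1, and b(0) = 5 and b(n) = −6n²(9n² − 1) for n ≥ 1. Then the convergents p(n)/q(n) of the continued fraction with partial quotients (a(n), b(n)) converge to log(2) as n → ∞. (This is a new continued fraction for log(2), converging in O((2/27)^n).) -/

import Mathlib

open Filter Topology

noncomputable def cw (m : ℕ) : ℝ := ∏ i ∈ Finset.range m, (2 * (i : ℝ) + 1) / (2 * i + 2)

noncomputable def TT : ℕ → ℕ → ℝ
  | 0, m => cw (m + 1) / (2 * ((m : ℝ) + 1))
  | n + 1, m => TT n m * (((n : ℝ) + 2 * m + 2) * ((m : ℝ) - n) / ((n : ℝ) + m + 2) ^ 2)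

lemma cw_pos (m : ℕ) : 0 < cw m := by
  unfold cw
  exact Finset.prod_pos fun i _ => by positivity

lemma cw_succ (m : ℕ) : cw (m + 1) = cw m * ((2 * (m : ℝ) + 1) / (2 * m + 2)) := by
  unfold cw
  rw [Finset.prod_range_succ]

lemma cw_sq (m : ℕ) : cw m ^ 2 ≤ 1 / ((m : ℝ) + 1) := by
  induction m with
  | zero => simp [cw]
  | succ m ih =>
    rw [cw_succ, mul_pow]
    calc cw m ^ 2 * ((2 * (m : ℝ) + 1) / (2 * m + 2)) ^ 2
        ≤ 1 / ((m : ℝ) + 1) * ((2 * (m : ℝ) + 1) / (2 * m + 2)) ^ 2 := by gcongr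
      _ ≤ 1 / (((m + 1 : ℕ) : ℝ) + 1) := by
        have hm : (0 : ℝ) ≤ m := Nat.cast_nonneg m
        push_cast
        rw [div_pow, div_mul_div_comm, div_le_div_iff₀ (by positivity) (by positivity)]
        nlinarith

lemma cw_tendsto : Tendsto cw atTop (𝓝 0) := by
  have h : Tendsto (fun m => cw m ^ 2) atTop (𝓝 0) :=
    squeeze_zero (fun m => sq_nonneg _) cw_sq tendsto_one_div_add_atTop_nhds_zero_nat
  have h2 := h.sqrt
  simp only [Real.sqrt_zero] at h2
  refine h2.congr fun m => ?_
  exact Real.sqrt_sq (cw_pos m).le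

lemma TT_eq_zero (n m : ℕ) (h : m < n) : TT n m = 0 := by
  induction n with
  | zero => omega
  | succ n ih =>
    rw [TT]
    rcases Nat.lt_succ_iff_lt_or_eq.mp h with h' | h'
    · rw [ih h', zero_mul]
    · subst h'; simp

lemma TT_nonneg (n m : ℕ) : 0 ≤ TT n m := by
  induction n with
  | zero => rw [TT]; have := cw_pos (m + 1); positivity
  | succ n ih =>
    rcases lt_or_ge m n with h | h
    · rw [TT_eq_zero _ _ (by omega)]
    · rw [TT]
      have : (0 : ℝ) ≤ (m : ℝ) - n := by
        have : (n : ℝ) ≤ m := by exact_mod_cast h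
        linarith
      positivity

lemma TT_succ_le (n m : ℕ) : TT (n + 1) m ≤ 2 * TT n m := by
  rw [TT, mul_comm 2 (TT n m)]
  apply mul_le_mul_of_nonneg_left _ (TT_nonneg n m)
  have hm : (0 : ℝ) ≤ m := Nat.cast_nonneg m
  have hn : (0 : ℝ) ≤ n := Nat.cast_nonneg n
  rw [div_le_iff₀ (by positivity)]
  nlinarith [mul_nonneg hm hn]

lemma TT_le (n m : ℕ) : TT n m ≤ 2 ^ n * TT 0 m := by
  induction n with
  | zero => simp
  | succ n ih =>
    have := TT_succ_le n m
    rw [pow_succ]; nlinarith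

lemma TT_ratio (n m : ℕ) :
    ((m : ℝ) + 1 - n) * TT n (m + 1) =
      TT n m * (((n : ℝ) + 2 * m + 2) * ((n : ℝ) + 2 * m + 3) * ((m : ℝ) + 1)) /
        (4 * ((n : ℝ) + m + 2) ^ 2) := by
  induction n with
  | zero =>
    simp only [TT]
    rw [cw_succ (m + 1)]
    push_cast
    field_simp
    ring
  | succ n ih =>
    have e : ((m : ℝ) + 1 - ((n + 1 : ℕ) : ℝ)) * TT (n + 1) (m + 1) =
        (((m : ℝ) + 1 - n) * TT n (m + 1)) * ((m : ℝ) - n) * ((n : ℝ) + 2 * (m + 1) + 2) /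
          ((n : ℝ) + (m + 1) + 2) ^ 2 := by
      rw [TT]; push_cast; ring
    rw [e, ih, TT]
    push_cast
    field_simp
    ring

lemma TT_zero_hasSum : HasSum (TT 0) (Real.log 2) := by
  have hae : ∀ᵐ t : ℝ, t ∈ Set.uIoc 0 Real.pi →
      HasSum (fun m : ℕ => Real.sin t ^ (2 * (m + 1)) / (2 * ((m : ℝ) + 1)))
        (-Real.log (Real.cos t)) := by
    have h0 : ∀ᵐ t : ℝ, t ≠ Real.pi / 2 := by
      simp [MeasureTheory.ae_iff, MeasureTheory.measure_singleton]
    filter_upwards [h0] with t ht hmem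
    rw [Set.uIoc_of_le Real.pi_pos.le] at hmem
    have hc : Real.cos t ≠ 0 := by
      intro h
      apply ht
      apply Real.injOn_cos ⟨hmem.1.le, hmem.2⟩ ⟨by positivity, by linarith [Real.pi_pos]⟩
      rw [h, Real.cos_pi_div_two]
    have hlt : |Real.sin t ^ 2| < 1 := by
      rw [abs_of_nonneg (sq_nonneg _)]
      have := Real.sin_sq_add_cos_sq t
      have : 0 < Real.cos t ^ 2 := by positivity
      linarith
    have := (Real.hasSum_pow_div_log_of_abs_lt_one hlt).mul_left (1 / 2)
    have e : 1 - Real.sin t ^ 2 = Real.cos t ^ 2 := by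
      linarith [Real.sin_sq_add_cos_sq t]
    rw [e, Real.log_pow] at this
    have e1 : (1 / 2 : ℝ) * -(((2 : ℕ) : ℝ) * Real.log (Real.cos t)) = -Real.log (Real.cos t) := by
      push_cast; ring
    rw [e1] at this
    have e2 : (fun m : ℕ => Real.sin t ^ (2 * (m + 1)) / (2 * ((m : ℝ) + 1))) =
        fun i : ℕ => 1 / 2 * ((Real.sin t ^ 2) ^ (i + 1) / ((i : ℝ) + 1)) := by
      funext m
      rw [← pow_mul]; field_simp
    rw [e2]
    exact this
  have hint : IntervalIntegrable (fun t => -Real.log (Real.cos t)) MeasureTheory.volume 0 Real.pi :=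
    (intervalIntegrable_log_cos).neg
  have key := intervalIntegral.hasSum_integral_of_dominated_convergence
    (μ := MeasureTheory.volume) (a := 0) (b := Real.pi)
    (F := fun (m : ℕ) t => Real.sin t ^ (2 * (m + 1)) / (2 * ((m : ℝ) + 1)))
    (f := fun t => -Real.log (Real.cos t))
    (fun (m : ℕ) t => Real.sin t ^ (2 * (m + 1)) / (2 * ((m : ℝ) + 1)))
    (fun m => by
      apply Continuous.aestronglyMeasurable
      fun_prop)
    (fun m => by
      refine Eventually.of_forall fun t _ => ?_
      rw [Real.norm_of_nonneg]
      rw [pow_mul]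
      positivity)
    (by filter_upwards [hae] with t ht hm using (ht hm).summable)
    (by
      refine hint.congr_ae ?_
      rw [Filter.EventuallyEq, MeasureTheory.ae_restrict_iff' measurableSet_uIoc]
      filter_upwards [hae] with t ht hm using (ht hm).tsum_eq.symm)
    hae
  have hv : ∫ t in (0 : ℝ)..Real.pi, -Real.log (Real.cos t) = Real.pi * Real.log 2 := by
    have hper : Function.Periodic (fun t => Real.log (Real.sin t)) Real.pi := by
      intro t; simp [Real.sin_add_pi]
    have h1 := hper.intervalIntegral_add_eq (Real.pi / 2) 0
    have h2 : ∫ t in (0 : ℝ)..Real.pi, Real.log (Real.cos t) =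
        ∫ t in (0 : ℝ)..Real.pi, Real.log (Real.sin (t + Real.pi / 2)) := by
      simp [Real.sin_add_pi_div_two]
    rw [intervalIntegral.integral_neg, h2,
      intervalIntegral.integral_comp_add_right (fun t => Real.log (Real.sin t)),
      zero_add, add_comm Real.pi, h1, zero_add, integral_log_sin_zero_pi]
    ring
  rw [hv] at key
  have := key.mul_left (1 / Real.pi)
  have e1 : 1 / Real.pi * (Real.pi * Real.log 2) = Real.log 2 := by
    field_simp
  rw [e1] at this
  have e2 : TT 0 = fun i : ℕ => 1 / Real.pi *
      ∫ t in (0 : ℝ)..Real.pi, Real.sin t ^ (2 * (i + 1)) / (2 * ((i : ℝ) + 1)) := by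
    funext m
    rw [intervalIntegral.integral_div, integral_sin_pow_even]
    simp only [TT, cw]
    field_simp
  rw [e2]
  exact this

lemma TT_summable (n : ℕ) : Summable (TT n) :=
  Summable.of_nonneg_of_le (TT_nonneg n) (TT_le n) (TT_zero_hasSum.summable.mul_left _)

noncomputable def vv (n : ℕ) : ℝ := ∑' m, TT n m

lemma vv_zero : vv 0 = Real.log 2 := TT_zero_hasSum.tsum_eq

lemma vv_nonneg (n : ℕ) : 0 ≤ vv n := tsum_nonneg (TT_nonneg n)

lemma vv_le (n : ℕ) : vv n ≤ 2 ^ n * Real.log 2 := by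
  rw [← vv_zero, vv, vv, ← tsum_mul_left]
  exact (TT_summable n).tsum_le_tsum (TT_le n) (TT_zero_hasSum.summable.mul_left _)

lemma mT_tendsto : Tendsto (fun m : ℕ => ((m : ℝ) + 1) * TT 0 m) atTop (𝓝 0) := by
  have := ((tendsto_add_atTop_iff_nat 1).mpr cw_tendsto).mul_const (1 / 2)
  rw [zero_mul] at this
  refine this.congr fun m => ?_
  simp only [TT]
  field_simp

lemma tele {f G : ℕ → ℝ} {S : ℝ} (hf : HasSum f S) (h : ∀ m, f m = G (m + 1) - G m)
    (hG : Tendsto G atTop (𝓝 0)) : S = -G 0 := by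
  have h1 := hf.tendsto_sum_nat
  have h2 : (fun n => ∑ i ∈ Finset.range n, f i) = fun n => G n - G 0 := by
    funext n
    rw [Finset.sum_congr rfl fun i _ => h i, Finset.sum_range_sub]
  rw [h2] at h1
  have h3 := hG.sub_const (G 0)
  rw [tendsto_nhds_unique h1 h3]; ring

lemma vv_one : vv 1 = 8 * Real.log 2 - 5 := by
  have hs : HasSum (fun m => TT 1 m - 8 * TT 0 m) (vv 1 - 8 * vv 0) :=
    (TT_summable 1).hasSum.sub ((TT_summable 0).hasSum.mul_left 8)
  have := tele (G := fun m => (12 * (m : ℝ) + 20) * TT 0 m) hs ?_ ?_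
  · rw [vv_zero] at this
    have e : TT 0 0 = 1 / 4 := by simp [TT, cw]; norm_num
    simp only [e] at this
    push_cast at this
    linarith
  · intro m
    have h := TT_ratio 0 m
    have h1 : TT 0 (m + 1) = TT 0 m * ((2 * (m : ℝ) + 2) * (2 * m + 3)) / (4 * ((m : ℝ) + 2) ^ 2) := by
      have h0 : (m : ℝ) + 1 ≠ 0 := by positivity
      apply mul_left_cancel₀ h0
      push_cast at h
      simp only [sub_zero, zero_add] at h
      rw [h]; ring
    have h2 : TT 1 m = TT 0 m * ((((0 : ℕ) : ℝ) + 2 * m + 2) * ((m : ℝ) - (0 : ℕ)) /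
        (((0 : ℕ) : ℝ) + m + 2) ^ 2) := rfl
    simp only [h1]
    rw [h2]
    push_cast
    field_simp
    ring
  · have h1 : Tendsto (fun m : ℕ => 20 * (((m : ℝ) + 1) * TT 0 m)) atTop (𝓝 0) := by
      simpa using mT_tendsto.const_mul 20
    refine squeeze_zero (fun m => ?_) (fun m => ?_) h1
    · have := TT_nonneg 0 m; positivity
    · have := TT_nonneg 0 m
      have hm : (0 : ℝ) ≤ m := Nat.cast_nonneg m
      nlinarith [mul_nonneg hm this]

noncomputable def XX (n m : ℝ) : ℝ :=
  (100 * n + 136) * m ^ 2 + (200 * n ^ 2 + 676 * n + 552) * m +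
    (84 * n ^ 3 + 452 * n ^ 2 + 800 * n + 464)

noncomputable def GG (n m : ℕ) : ℝ :=
  XX n m / ((n : ℝ) + m + 2) ^ 2 * (((m : ℝ) - n) * TT n m)

lemma GG_tele (n m : ℕ) :
    ((n : ℝ) + 2) ^ 2 * TT (n + 2) m - (29 * ((n : ℝ) + 1) ^ 2 + 29 * (n + 1) + 8) * TT (n + 1) m
      + 6 * (9 * ((n : ℝ) + 1) ^ 2 - 1) * TT n m = GG n (m + 1) - GG n m := by
  have h := TT_ratio n m
  have e : GG n (m + 1) = XX n (m + 1) / ((n : ℝ) + m + 3) ^ 2 *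
      (((m : ℝ) + 1 - n) * TT n (m + 1)) := by
    simp only [GG]; push_cast; ring_nf
  rw [e, h]
  simp only [GG, TT, XX]
  push_cast
  have e2 : (n : ℝ) + 1 + m + 2 = n + m + 3 := by ring
  rw [e2]
  field_simp
  ring

lemma GG_tendsto (n : ℕ) : Tendsto (GG n) atTop (𝓝 0) := by
  have h1 := mT_tendsto.const_mul (XX n 1 * 2 ^ n)
  rw [mul_zero] at h1
  refine squeeze_zero (fun m => ?_) (fun m => ?_) h1
  · rcases lt_or_ge m n with h | h
    · simp [GG, TT_eq_zero n m h]
    · have h2 : (0 : ℝ) ≤ (m : ℝ) - n := by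
        have : (n : ℝ) ≤ m := by exact_mod_cast h
        linarith
      have := TT_nonneg n m
      unfold GG XX
      positivity
  · have hm : (0 : ℝ) ≤ m := Nat.cast_nonneg m
    have hn : (0 : ℝ) ≤ n := Nat.cast_nonneg n
    have hX : XX n m ≤ XX n 1 * ((m : ℝ) + 1) ^ 2 := by
      have a1 : (m : ℝ) ^ 2 ≤ 1 * ((m : ℝ) + 1) ^ 2 := by nlinarith
      have a2 : (m : ℝ) ≤ 1 * ((m : ℝ) + 1) ^ 2 := by nlinarith
      have a3 : 1 ≤ ((m : ℝ) + 1) ^ 2 := by nlinarith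
      have b1 : (0 : ℝ) ≤ 100 * n + 136 := by positivity
      have b2 : (0 : ℝ) ≤ 200 * n ^ 2 + 676 * n + 552 := by positivity
      have b3 : (0 : ℝ) ≤ 84 * n ^ 3 + 452 * n ^ 2 + 800 * n + 464 := by positivity
      have := mul_le_mul_of_nonneg_left a1 b1
      have := mul_le_mul_of_nonneg_left a2 b2
      have := mul_le_mul_of_nonneg_left a3 b3
      unfold XX
      linarith
    have hX1 : 0 ≤ XX n 1 := by unfold XX; positivity
    have hT := TT_nonneg n m
    have hX0 : 0 ≤ XX n m := by unfold XX; positivity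
    calc GG n m = XX n m * ((m : ℝ) - n) / ((n : ℝ) + m + 2) ^ 2 * TT n m := by
          unfold GG; ring
      _ ≤ (XX n 1 * ((m : ℝ) + 1)) * TT n m := by
          apply mul_le_mul_of_nonneg_right _ hT
          rw [div_le_iff₀ (by positivity)]
          calc XX n m * ((m : ℝ) - n) ≤ XX n m * ((n : ℝ) + m + 2) :=
                mul_le_mul_of_nonneg_left (by linarith) hX0
            _ ≤ (XX n 1 * ((m : ℝ) + 1) ^ 2) * ((n : ℝ) + m + 2) := by gcongr
            _ = XX n 1 * ((m : ℝ) + 1) * (((m : ℝ) + 1) * ((n : ℝ) + m + 2)) := by ring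
            _ ≤ XX n 1 * ((m : ℝ) + 1) * (((n : ℝ) + m + 2) ^ 2) := by
                apply mul_le_mul_of_nonneg_left _ (by positivity)
                nlinarith
      _ ≤ (XX n 1 * ((m : ℝ) + 1)) * (2 ^ n * TT 0 m) :=
          mul_le_mul_of_nonneg_left (TT_le n m) (by positivity)
      _ = XX n 1 * 2 ^ n * (((m : ℝ) + 1) * TT 0 m) := by ring

lemma vv_rec (n : ℕ) :
    ((n : ℝ) + 2) ^ 2 * vv (n + 2) = (29 * ((n : ℝ) + 1) ^ 2 + 29 * (n + 1) + 8) * vv (n + 1)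
      - 6 * (9 * ((n : ℝ) + 1) ^ 2 - 1) * vv n := by
  have hs := (((TT_summable (n + 2)).hasSum.mul_left (((n : ℝ) + 2) ^ 2)).sub
    ((TT_summable (n + 1)).hasSum.mul_left (29 * ((n : ℝ) + 1) ^ 2 + 29 * (n + 1) + 8))).add
    ((TT_summable n).hasSum.mul_left (6 * (9 * ((n : ℝ) + 1) ^ 2 - 1)))
  have := tele hs (GG_tele n) (GG_tendsto n)
  have h0 : GG n 0 = 0 := by
    rcases Nat.eq_zero_or_pos n with h | h
    · subst h; simp [GG]
    · simp [GG, TT_eq_zero n 0 h]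
  rw [h0] at this
  simp only [vv]
  linarith

theorem stmt_19 
    (a b p q : ℕ → ℝ)
    (ha0 : a 0 = 0)
    (ha : ∀ n : ℕ, 1 ≤ n → a n = 29 * (n : ℝ) ^ 2 - 29 * (n : ℝ) + 8)
    (hb0 : b 0 = 5)
    (hb : ∀ n : ℕ, 1 ≤ n → b n = -(6 * (n : ℝ) ^ 2 * (9 * (n : ℝ) ^ 2 - 1)))
    (hp0 : p 0 = a 0) (hq0 : q 0 = 1)
    (hp1 : p 1 = a 0 * a 1 + b 0) (hq1 : q 1 = a 1)
    (hp : ∀ n : ℕ, p (n + 2) = a (n + 2) * p (n + 1) + b (n + 1) * p n)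
    (hq : ∀ n : ℕ, q (n + 2) = a (n + 2) * q (n + 1) + b (n + 1) * q n) :
    Tendsto (fun n => p n / q n) atTop (𝓝 (Real.log 2)) := by
  have ha1 : a 1 = 8 := by rw [ha 1 le_rfl]; norm_num
  have he : ∀ n : ℕ, q n * Real.log 2 - p n = (n.factorial : ℝ) ^ 2 * vv n ∧
      q (n + 1) * Real.log 2 - p (n + 1) = ((n + 1).factorial : ℝ) ^ 2 * vv (n + 1) := by
    intro n
    induction n with
    | zero =>
      refine ⟨?_, ?_⟩
      · rw [hq0, hp0, ha0, vv_zero]; simp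
      · rw [zero_add, hq1, hp1, ha0, ha1, hb0, vv_one]; simp
    | succ n ih =>
      refine ⟨ih.2, ?_⟩
      have e : q (n + 1 + 1) * Real.log 2 - p (n + 1 + 1) =
          a (n + 2) * (q (n + 1) * Real.log 2 - p (n + 1)) +
            b (n + 1) * (q n * Real.log 2 - p n) := by
        rw [hp, hq]; ring
      rw [e, ih.1, ih.2, ha _ (by omega), hb _ (by omega), Nat.factorial_succ (n + 1),
        Nat.factorial_succ n]
      push_cast
      have := vv_rec n
      linear_combination (-((n : ℝ) + 1) ^ 2 * (n.factorial : ℝ) ^ 2) * this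
  have hqb : ∀ n : ℕ, 0 < q n ∧ 8 * ((n : ℝ) + 1) ^ 2 * q n ≤ q (n + 1) := by
    intro n
    induction n with
    | zero => rw [zero_add, hq0, hq1, ha1]; norm_num
    | succ n ih =>
      obtain ⟨h1, h2⟩ := ih
      have hpos : 0 < q (n + 1) := lt_of_lt_of_le (by positivity) h2
      refine ⟨hpos, ?_⟩
      rw [hq, ha _ (by omega), hb _ (by omega)]
      push_cast
      have hn : (0 : ℝ) ≤ n := Nat.cast_nonneg n
      have h3 := mul_le_mul_of_nonneg_left h2
        (show (0 : ℝ) ≤ 6 * (9 * ((n : ℝ) + 1) ^ 2 - 1) / 8 by nlinarith)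
      have h4 : 0 ≤ (29 * ((n : ℝ) + 2) ^ 2 - 29 * (n + 2) + 8
          - 6 * (9 * ((n : ℝ) + 1) ^ 2 - 1) / 8 - 8 * (n + 1 + 1) ^ 2) * q (n + 1) := by
        apply mul_nonneg _ hpos.le
        nlinarith
      linarith
  have hq8 : ∀ n : ℕ, 8 ^ n * (n.factorial : ℝ) ^ 2 ≤ q n := by
    intro n
    induction n with
    | zero => simp [hq0]
    | succ n ih =>
      refine le_trans ?_ (hqb n).2
      rw [Nat.factorial_succ]
      push_cast
      have := mul_le_mul_of_nonneg_left ih (show (0 : ℝ) ≤ 8 * ((n : ℝ) + 1) ^ 2 by positivity)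
      calc _ = 8 * ((n : ℝ) + 1) ^ 2 * (8 ^ n * (n.factorial : ℝ) ^ 2) := by ring
        _ ≤ _ := this
  have hlim : Tendsto (fun n => Real.log 2 - p n / q n) atTop (𝓝 0) := by
    have h1 : Tendsto (fun n : ℕ => (1 / 4 : ℝ) ^ n * Real.log 2) atTop (𝓝 0) := by
      simpa using (tendsto_pow_atTop_nhds_zero_of_lt_one (r := (1 / 4 : ℝ))
        (by norm_num) (by norm_num)).mul_const (Real.log 2)
    have e : ∀ n, Real.log 2 - p n / q n = (n.factorial : ℝ) ^ 2 * vv n / q n := by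
      intro n
      have := (hqb n).1
      rw [← (he n).1]; field_simp
    refine squeeze_zero (fun n => ?_) (fun n => ?_) h1
    · rw [e]
      have := (hqb n).1
      have := vv_nonneg n
      positivity
    · rw [e, div_le_iff₀ (hqb n).1]
      have hl : 0 ≤ Real.log 2 := Real.log_nonneg (by norm_num)
      calc (n.factorial : ℝ) ^ 2 * vv n ≤ (n.factorial : ℝ) ^ 2 * (2 ^ n * Real.log 2) :=
            mul_le_mul_of_nonneg_left (vv_le n) (by positivity)
        _ = (1 / 4 : ℝ) ^ n * Real.log 2 * (8 ^ n * (n.factorial : ℝ) ^ 2) := by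
            have : (2 : ℝ) ^ n = (1 / 4) ^ n * 8 ^ n := by rw [← mul_pow]; norm_num
            rw [this]; ring
        _ ≤ _ := mul_le_mul_of_nonneg_left (hq8 n) (by positivity)
  have := hlim.const_sub (Real.log 2)
  simpa using this
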